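/- The number e (the base of the natural logarithm, Real.exp 1) cannot be written in the form (m₁/n₁)^((m₂/n₂)^(m₃/n₃)) for any positive natural numbers m₁, n₁, m₂, n₂, m₃, n₃, where ^ denotes the real power function. -/

import Mathlib

/-!
If `e = x ^ y` with `x > 0` and `y` algebraic, then `exp y⁻¹ = x` is algebraic, against the
Hermite–Lindemann theorem.

For the latter, let `L` be a finite Galois extension of `ℚ` inside `ℂ`. The group ring `ℤ[L]` of the
torsion-free additive group of `L` has no zero divisors, and evaluating `[a]` at `exp a` is
injective on it: if a nonzero `P` were killed, so would be the product of its Galois conjugates, and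
multiplying by the orbit sum of some `[-a]` gives a Galois-invariant relation `k + ∑ wᵢ exp aᵢ = 0`
with an integer `k ≠ 0` and all `aᵢ ≠ 0`. Hermite's simultaneous approximations replace `n exp aᵢ`
by `p g(aᵢ)` for a large prime `p`, with error `O(cᵖ / (p - 1)!)`. By Galois invariance
`∑ wᵢ g(aᵢ)` is rational with denominator bounded by a `p`-th power, so clearing denominators in
the relation leaves an integer that tends to `0` but is nonzero modulo `p`.
-/

open Polynomial Filter Topology
open scoped Nat

section Integrality

theorem isIntegral_pow_smul_aeval {R S : Type*} [CommRing R] [CommRing S] [Algebra R S]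
    {b : R} {s : S} (hs : IsIntegral R (b • s)) {g : R[X]} {m : ℕ} (hg : g.natDegree ≤ m) :
    IsIntegral R (b ^ m • aeval s g) := by
  rw [aeval_eq_sum_range' (Nat.lt_succ_of_le hg), Finset.smul_sum]
  refine IsIntegral.sum _ fun i hi ↦ ?_
  have him : i ≤ m := Nat.lt_succ_iff.1 (Finset.mem_range.1 hi)
  have hterm : b ^ m • g.coeff i • s ^ i = (g.coeff i * b ^ (m - i)) • (b • s) ^ i := by
    rw [_root_.smul_pow, smul_smul, smul_smul, mul_assoc, pow_sub_mul_pow b him, mul_comm]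
  rw [hterm]
  exact (hs.pow i).smul _

theorem exists_algebraMap_eq_sum_of_equivariant {R K L : Type*} [CommRing R]
    [IsIntegrallyClosed R] [Field K] [Algebra R K] [IsFractionRing R K] [Field L] [Algebra R L]
    [Algebra K L] [IsScalarTower R K L] [IsGalois K L] {s : Finset L} {u : L → L}
    (hs : ∀ σ : Gal(L/K), ∀ a ∈ s, σ a ∈ s) (hu : ∀ σ : Gal(L/K), ∀ a ∈ s, u (σ a) = σ (u a))
    (hint : ∀ a ∈ s, IsIntegral R (u a)) :
    ∃ r : R, algebraMap R L r = ∑ a ∈ s, u a := by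
  have hfixed (σ : Gal(L/K)) : σ (∑ a ∈ s, u a) = ∑ a ∈ s, u a := by
    rw [map_sum]
    refine Finset.sum_equiv σ.toEquiv (fun a ↦ ⟨hs σ a, fun h ↦ ?_⟩) fun a ha ↦ (hu σ a ha).symm
    simpa using hs σ⁻¹ _ h
  obtain ⟨q, hq⟩ := (InfiniteGalois.mem_range_algebraMap_iff_fixed (k := K) _).2 hfixed
  have hq_int : IsIntegral R q := by
    rw [← isIntegral_algebraMap_iff (algebraMap K L).injective, hq]
    exact IsIntegral.sum _ hint
  obtain ⟨r, hr⟩ := IsIntegrallyClosed.isIntegral_iff.1 hq_int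
  exact ⟨r, by rw [IsScalarTower.algebraMap_apply R K L, hr, hq]⟩

end Integrality

section Analytic

variable {ι : Type*} {s : Finset ι}

theorem exists_eval_zero_ne_zero_forall_aeval_eq_zero {R A : Type*} [CommRing R] [IsDomain R]
    [CommRing A] [IsDomain A] [Algebra R A] {a : ι → A} (ha₀ : ∀ i ∈ s, a i ≠ 0)
    (ha : ∀ i ∈ s, IsAlgebraic R (a i)) :
    ∃ f : R[X], f.eval 0 ≠ 0 ∧ ∀ i ∈ s, aeval (a i) f = 0 := by
  have hroot (i : s) : ∃ f : R[X], f.eval 0 ≠ 0 ∧ aeval (a i) f = 0 := by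
    simpa only [coeff_zero_eq_eval_zero] using
      (ha i i.2).exists_nonzero_coeff_and_aeval_eq_zero
        (mem_nonZeroDivisors_of_ne_zero (ha₀ i i.2))
  choose f hf₀ hf using hroot
  refine ⟨∏ i, f i, ?_, fun i hi ↦ ?_⟩
  · rw [eval_prod]
    exact Finset.prod_ne_zero_iff.2 fun i _ ↦ hf₀ i
  · rw [map_prod]
    exact Finset.prod_eq_zero (Finset.mem_univ ⟨i, hi⟩) (hf ⟨i, hi⟩)

theorem tendsto_pow_div_factorial_pred_atTop (x : ℝ) :
    Tendsto (fun n : ℕ ↦ x ^ n / (n - 1)!) atTop (𝓝 0) := by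
  rw [← tendsto_add_atTop_iff_nat 1]
  simpa [pow_succ', mul_div_assoc] using
    (FloorSemiring.tendsto_pow_div_factorial_atTop x).const_mul x

variable {a : ι → ℂ}

theorem exists_simultaneous_exp_approx (ha₀ : ∀ i ∈ s, a i ≠ 0)
    (ha : ∀ i ∈ s, IsAlgebraic ℤ (a i)) :
    ∃ (d : ℕ) (c : ℝ), ∀ᶠ p : ℕ in atTop, p.Prime →
      ∃ n : ℤ, ¬ (p : ℤ) ∣ n ∧ ∃ g : ℤ[X], g.natDegree ≤ p * d ∧
        ∀ i ∈ s, ‖n * Complex.exp (a i) - p * aeval (a i) g‖ ≤ c ^ p / (p - 1)! := by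
  obtain ⟨f, hf₀, hf⟩ := exists_eval_zero_ne_zero_forall_aeval_eq_zero ha₀ ha
  obtain ⟨c, hc⟩ := LindemannWeierstrass.exp_polynomial_approx f hf₀
  refine ⟨f.natDegree, c, (eventually_gt_atTop (f.eval 0).natAbs).mono fun p hp hprime ↦ ?_⟩
  obtain ⟨n, hn, g, hg, hbound⟩ := hc p hp hprime
  have hf_ne : f ≠ 0 := by rintro rfl; simp at hf₀
  refine ⟨n, hn, g, hg.trans (Nat.sub_le _ _), fun i hi ↦ ?_⟩
  simpa only [zsmul_eq_mul, nsmul_eq_mul] using hbound (mem_aroots.2 ⟨hf_ne, hf i hi⟩)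

theorem mul_mul_pow_add_mul_ne_zero_of_prime {p : ℕ} (hp : p.Prime) {n k b : ℤ} (m : ℕ) (z : ℤ)
    (hn : ¬ (p : ℤ) ∣ n) (hk : k ≠ 0) (hkp : k.natAbs < p) (hb : b ≠ 0) (hbp : b.natAbs < p) :
    n * k * b ^ m + p * z ≠ 0 := by
  intro h
  have hp' : Prime (p : ℤ) := Nat.prime_iff_prime_int.1 hp
  have hdvd {x : ℤ} (hx : x ≠ 0) (hxp : x.natAbs < p) : ¬ (p : ℤ) ∣ x := fun h ↦
    hxp.not_ge (Nat.le_of_dvd (Int.natAbs_pos.2 hx) (Int.natCast_dvd.1 h))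
  have : (p : ℤ) ∣ n * k * b ^ m := (dvd_add_left (dvd_mul_right _ z)).1 (h ▸ dvd_zero _)
  rcases hp'.dvd_or_dvd this with hnk | hbm
  · exact (hp'.dvd_or_dvd hnk).elim hn (hdvd hk hkp)
  · exact hdvd hb hbp (hp'.dvd_of_dvd_pow hbm)

theorem intCast_add_sum_mul_exp_ne_zero {w : ι → ℤ} {k b : ℤ} (ha₀ : ∀ i ∈ s, a i ≠ 0)
    (ha : ∀ i ∈ s, IsAlgebraic ℤ (a i)) (hk : k ≠ 0) (hb : b ≠ 0)
    (hint : ∀ (g : ℤ[X]) (m : ℕ), g.natDegree ≤ m →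
      ∃ z : ℤ, (z : ℂ) = b ^ m * ∑ i ∈ s, w i * aeval (a i) g) :
    k + ∑ i ∈ s, w i * Complex.exp (a i) ≠ 0 := by
  intro hzero
  obtain ⟨d, c, happrox⟩ := exists_simultaneous_exp_approx ha₀ ha
  set W : ℝ := ∑ i ∈ s, |(w i : ℝ)|
  have hsmall : ∀ᶠ p : ℕ in atTop, W * ((|(b : ℝ)| ^ d * c) ^ p / (p - 1)!) < 1 := by
    have := (tendsto_pow_div_factorial_pred_atTop (|(b : ℝ)| ^ d * c)).const_mul W
    rw [mul_zero] at this
    exact this.eventually_lt_const one_pos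
  obtain ⟨p, hp, hp_small, hp_approx, hkp, hbp⟩ :=
    ((Nat.frequently_atTop_iff_infinite.2 Nat.infinite_setOfPred_prime).and_eventually
      (hsmall.and (happrox.and ((eventually_gt_atTop k.natAbs).and
        (eventually_gt_atTop b.natAbs))))).exists
  obtain ⟨n, hn, g, hg, hbound⟩ := hp_approx hp
  obtain ⟨z, hz⟩ := hint g (p * d) hg
  set E : ℂ := ∑ i ∈ s, w i * (n * Complex.exp (a i) - p * aeval (a i) g)
  have hE_eq : b ^ (p * d) * E = -(n * k * b ^ (p * d) + p * z : ℤ) := by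
    have hE_split : E = n * ∑ i ∈ s, w i * Complex.exp (a i) -
        p * ∑ i ∈ s, w i * aeval (a i) g := by
      simp only [E, mul_sub, Finset.sum_sub_distrib, Finset.mul_sum, mul_left_comm]
    push_cast
    rw [hE_split]
    linear_combination (n * b ^ (p * d) : ℂ) * hzero + (p : ℂ) * hz
  have hE_le : ‖E‖ ≤ W * (c ^ p / (p - 1)!) := by
    rw [Finset.sum_mul]
    refine norm_sum_le_of_le _ fun i hi ↦ ?_
    rw [norm_mul, Complex.norm_intCast]
    gcongr
    exact hbound i hi
  have hone_le : (1 : ℝ) ≤ ‖(b : ℂ) ^ (p * d) * E‖ := by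
    rw [hE_eq, norm_neg, Complex.norm_intCast]
    exact_mod_cast Int.one_le_abs
      (mul_mul_pow_add_mul_ne_zero_of_prime hp (p * d) z hn hk hkp hb hbp)
  refine hp_small.not_ge (hone_le.trans ?_)
  calc ‖(b : ℂ) ^ (p * d) * E‖ = |(b : ℝ)| ^ (p * d) * ‖E‖ := by
        rw [norm_mul, norm_pow, Complex.norm_intCast]
    _ ≤ |(b : ℝ)| ^ (p * d) * (W * (c ^ p / (p - 1)!)) := by gcongr
    _ = W * ((|(b : ℝ)| ^ d * c) ^ p / (p - 1)!) := by
        rw [mul_pow, ← pow_mul, mul_comm d p]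
        ring

end Analytic

section ExpEval

variable {L : Type*} [Field L] [Algebra L ℂ]

variable (L) in
/-- Evaluation at the exponential: the formal exponential sum `∑ kₐ [a]` in the group ring `ℤ[L]`
of the additive group of `L` is sent to `∑ kₐ exp a`, with `L` mapped to `ℂ` by `algebraMap`. -/
noncomputable def expEval : AddMonoidAlgebra ℤ L →ₐ[ℤ] ℂ :=
  AddMonoidAlgebra.lift ℤ ℂ L
    (Complex.expMonoidHom.comp (algebraMap L ℂ).toAddMonoidHom.toMultiplicative)

theorem expEval_apply (P : AddMonoidAlgebra ℤ L) :
    expEval L P = ∑ a ∈ P.coeff.support, P.coeff a * Complex.exp (algebraMap L ℂ a) := by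
  simp [expEval, AddMonoidAlgebra.lift_apply', Finsupp.sum]

theorem expEval_single (a : L) (k : ℤ) :
    expEval L (.single a k) = k * Complex.exp (algebraMap L ℂ a) := by
  simp [expEval]

end ExpEval

section GroupRing

variable {L : Type*} [Field L] [Algebra ℚ L]

/-- The automorphism of the group ring `ℤ[L]` of the additive group of `L` that applies `σ` to the
exponents and fixes the coefficients. -/
noncomputable def galConj (σ : Gal(L/ℚ)) : AddMonoidAlgebra ℤ L ≃ₐ[ℤ] AddMonoidAlgebra ℤ L :=
  AddMonoidAlgebra.domCongr ℤ ℤ (σ : L ≃+ L)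

theorem coeff_galConj (σ : Gal(L/ℚ)) (P : AddMonoidAlgebra ℤ L) (a : L) :
    (galConj σ P).coeff a = P.coeff (σ⁻¹ a) :=
  AddMonoidAlgebra.coeff_domCongr ..

theorem galConj_single (σ : Gal(L/ℚ)) (a : L) (k : ℤ) :
    galConj σ (.single a k) = .single (σ a) k :=
  AddMonoidAlgebra.domCongr_single ..

theorem galConj_one (P : AddMonoidAlgebra ℤ L) : galConj 1 P = P := by
  ext a
  rw [coeff_galConj, inv_one, AlgEquiv.one_apply]

theorem galConj_galConj (τ σ : Gal(L/ℚ)) (P : AddMonoidAlgebra ℤ L) :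
    galConj τ (galConj σ P) = galConj (τ * σ) P := by
  ext a
  simp only [coeff_galConj, mul_inv_rev, AlgEquiv.mul_apply]

theorem coeff_apply_of_galConj_eq {P : AddMonoidAlgebra ℤ L} (hP : ∀ σ, galConj σ P = P)
    (σ : Gal(L/ℚ)) (a : L) : P.coeff (σ a) = P.coeff a := by
  rw [← congrArg (fun Q ↦ Q.coeff a) (hP σ⁻¹), coeff_galConj, inv_inv]

theorem exists_intCast_eq_pow_mul_sum_aeval [IsGalois ℚ L] {w : L → ℤ} {s : Finset L}
    (hs : ∀ σ : Gal(L/ℚ), ∀ a ∈ s, σ a ∈ s) (hw : ∀ σ : Gal(L/ℚ), ∀ a ∈ s, w (σ a) = w a)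
    {b : ℤ} (hb : ∀ a ∈ s, IsIntegral ℤ (b • a)) {g : ℤ[X]} {m : ℕ} (hg : g.natDegree ≤ m) :
    ∃ z : ℤ, (z : L) = b ^ m * ∑ a ∈ s, w a * aeval a g := by
  obtain ⟨z, hz⟩ := exists_algebraMap_eq_sum_of_equivariant (R := ℤ) (K := ℚ)
    (u := fun a ↦ w a • b ^ m • aeval a g) hs
    (fun σ a ha ↦ by
      have haeval : aeval (σ a) g = σ (aeval a g) :=
        aeval_algHom_apply (σ : L →+* L).toIntAlgHom a g
      simp only [hw σ a ha, haeval, map_zsmul])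
    (fun a ha ↦ (isIntegral_pow_smul_aeval (hb a ha) hg).smul _)
  refine ⟨z, ?_⟩
  rw [← eq_intCast (algebraMap ℤ L), hz, Finset.mul_sum]
  refine Finset.sum_congr rfl fun a _ ↦ ?_
  simp only [zsmul_eq_mul, Int.cast_pow, mul_left_comm]

section FiniteDimensional

variable [FiniteDimensional ℚ L]

theorem galConj_prod_galConj (τ : Gal(L/ℚ)) (P : AddMonoidAlgebra ℤ L) :
    galConj τ (∏ σ, galConj σ P) = ∏ σ, galConj σ P := by
  simp only [map_prod, galConj_galConj]
  exact Fintype.prod_equiv (Equiv.mulLeft τ) _ _ fun _ ↦ rfl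

theorem galConj_sum_galConj (τ : Gal(L/ℚ)) (P : AddMonoidAlgebra ℤ L) :
    galConj τ (∑ σ, galConj σ P) = ∑ σ, galConj σ P := by
  simp only [map_sum, galConj_galConj]
  exact Fintype.sum_equiv (Equiv.mulLeft τ) _ _ fun _ ↦ rfl

end FiniteDimensional

variable [Algebra L ℂ] [IsGalois ℚ L] {P : AddMonoidAlgebra ℤ L}

theorem expEval_ne_zero_of_coeff_zero_ne_zero (hP : ∀ σ, galConj σ P = P)
    (hP₀ : P.coeff 0 ≠ 0) : expEval L P ≠ 0 := by
  classical
  have hcoeff := coeff_apply_of_galConj_eq hP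
  have : Algebra.IsAlgebraic ℤ L := (IsFractionRing.comap_isAlgebraic_iff (K := ℚ)).2 inferInstance
  set s := P.coeff.support.erase 0
  have hs (σ : Gal(L/ℚ)) (a : L) (ha : a ∈ s) : σ a ∈ s := by
    simpa [s, hcoeff] using ha
  obtain ⟨b, hb₀, hb⟩ := Algebra.IsAlgebraic.exists_integral_multiples ℤ s
  have := intCast_add_sum_mul_exp_ne_zero (s := s) (a := algebraMap L ℂ) (w := P.coeff)
    (k := P.coeff 0) (b := b) (fun a ha ↦ by simpa using Finset.ne_of_mem_erase ha)
    (fun a _ ↦ (Algebra.IsAlgebraic.isAlgebraic a).algebraMap) hP₀ hb₀ fun g m hg ↦ by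
      obtain ⟨z, hz⟩ := exists_intCast_eq_pow_mul_sum_aeval (w := P.coeff) hs
        (fun σ a _ ↦ hcoeff σ a) hb hg
      exact ⟨z, by simpa [aeval_algebraMap_apply] using congrArg (algebraMap L ℂ) hz⟩
  rw [expEval_apply, ← Finset.add_sum_erase _ _ (Finsupp.mem_support_iff.2 hP₀)]
  simpa using this

variable [FiniteDimensional ℚ L]

theorem expEval_ne_zero_of_galConj_eq (hP : ∀ σ, galConj σ P = P) (hP₀ : P ≠ 0) :
    expEval L P ≠ 0 := by
  obtain ⟨a, ha⟩ : ∃ a, P.coeff a ≠ 0 := by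
    contrapose! hP₀
    ext a
    exact hP₀ a
  -- Some exponent `a` occurs in `P`; multiplying by the orbit sum of `[-a]` moves it to `0`.
  set Q : AddMonoidAlgebra ℤ L := ∑ σ, galConj σ (.single (-a) 1)
  have hQP₀ : (Q * P).coeff 0 = Fintype.card Gal(L/ℚ) * P.coeff a := by
    simp [Q, Finset.sum_mul, galConj_single, coeff_apply_of_galConj_eq hP]
  have hQP : expEval L (Q * P) ≠ 0 := by
    refine expEval_ne_zero_of_coeff_zero_ne_zero (fun τ ↦ ?_) ?_
    · rw [map_mul, galConj_sum_galConj, hP]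
    · rw [hQP₀]
      exact mul_ne_zero (Nat.cast_ne_zero.2 Fintype.card_ne_zero) ha
  rw [map_mul] at hQP
  exact right_ne_zero_of_mul hQP

variable (L) in
theorem expEval_injective : Function.Injective (expEval L) := by
  refine (injective_iff_map_eq_zero _).2 fun P ↦ ?_
  contrapose!
  intro hP
  have hnorm : expEval L (∏ σ, galConj σ P) ≠ 0 :=
    expEval_ne_zero_of_galConj_eq (galConj_prod_galConj · P) <|
      Finset.prod_ne_zero_iff.2 fun σ _ ↦ (map_ne_zero_iff _ (galConj σ).injective).2 hP
  rw [map_prod, Finset.prod_ne_zero_iff] at hnorm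
  simpa only [galConj_one] using hnorm 1 (Finset.mem_univ 1)

end GroupRing

section Transcendence

theorem transcendental_addMonoidAlgebra_single (R : Type*) {A : Type*} [CommRing R]
    [AddCommMonoid A] {a : A} (ha : Function.Injective fun n : ℕ ↦ n • a) :
    Transcendental R (AddMonoidAlgebra.single a 1 : AddMonoidAlgebra R A) := by
  rw [transcendental_iff_injective]
  have haeval : aeval (AddMonoidAlgebra.single a 1 : AddMonoidAlgebra R A) =
      (AddMonoidAlgebra.mapDomainAlgHom R R (multiplesHom A a)).comp
        (toFinsuppIsoAlg R).toAlgHom := by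
    ext
    simp
  rw [haeval]
  exact (AddMonoidAlgebra.mapDomain_injective ha).comp (toFinsuppIsoAlg R).injective

theorem transcendental_cexp {z : ℂ} (hz₀ : z ≠ 0) (hz : IsAlgebraic ℚ z) :
    Transcendental ℚ (Complex.exp z) := by
  set L := IntermediateField.adjoin ℚ ((minpoly ℚ z).rootSet ℂ)
  have : (minpoly ℚ z).IsSplittingField ℚ L :=
    IntermediateField.adjoin_rootSet_isSplittingField (IsAlgClosed.splits _)
  have : FiniteDimensional ℚ L := IsSplittingField.finiteDimensional L (minpoly ℚ z)
  have : Normal ℚ L := .of_isSplittingField (minpoly ℚ z)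
  have : IsGalois ℚ L := ⟨⟩
  let a : L := ⟨z, IntermediateField.subset_adjoin _ _
    (mem_rootSet.2 ⟨minpoly.ne_zero hz.isIntegral, minpoly.aeval _ _⟩)⟩
  have ha₀ : a ≠ 0 := fun h ↦ hz₀ (congrArg Subtype.val h)
  have hexp : Complex.exp z = expEval L (.single a 1) := by
    rw [expEval_single, Int.cast_one, one_mul]
    rfl
  rw [Transcendental, ← IsFractionRing.isAlgebraic_iff ℤ ℚ ℂ, hexp,
    isAlgebraic_algHom_iff _ (expEval_injective L)]
  exact transcendental_addMonoidAlgebra_single ℤ (fun m n h ↦ by simpa [ha₀] using h)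

theorem transcendental_rexp {x : ℝ} (hx₀ : x ≠ 0) (hx : IsAlgebraic ℚ x) :
    Transcendental ℚ (Real.exp x) := by
  rw [Transcendental, ← isAlgebraic_algebraMap_iff (algebraMap ℝ ℂ).injective]
  simpa [Transcendental] using transcendental_cexp (Complex.ofReal_ne_zero.2 hx₀) hx.algebraMap

theorem isAlgebraic_rpow_ratCast {R : Type*} [CommRing R] [IsDomain R] [Algebra R ℝ] {x : ℝ}
    (hx₀ : 0 ≤ x) (hx : IsAlgebraic R x) (q : ℚ) : IsAlgebraic R (x ^ (q : ℝ)) := by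
  have hpow : (x ^ (q : ℝ)) ^ q.den = x ^ q.num := by
    have hq : (q : ℝ) * q.den = q.num := by
      exact_mod_cast congrArg ((↑) : ℚ → ℝ) q.mul_den_eq_num
    rw [← Real.rpow_natCast, ← Real.rpow_mul hx₀, hq, Real.rpow_intCast]
  refine .of_pow q.pos ?_
  rw [hpow]
  obtain ⟨n, hn | hn⟩ := q.num.eq_nat_or_neg
  · simpa only [hn, zpow_natCast] using hx.pow n
  · simpa only [hn, zpow_neg, zpow_natCast] using (hx.pow n).inv

theorem exp_one_not_of_form_general {x y : ℝ} (hx₀ : 0 < x) (hx : IsAlgebraic ℚ x)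
    (hy : IsAlgebraic ℚ y) : Real.exp 1 ≠ x ^ y := by
  intro h
  have hy₀ : y ≠ 0 := by
    rintro rfl
    simp at h
  have hexp : Real.exp y⁻¹ = x := by
    rw [← Real.exp_one_rpow, h, Real.rpow_rpow_inv hx₀.le hy₀]
  exact transcendental_rexp (inv_ne_zero hy₀) hy.inv (hexp ▸ hx)

end Transcendence

/-- The number `e` cannot be written as `(m₁/n₁) ^ ((m₂/n₂) ^ (m₃/n₃))`
for positive naturals, with `^` the real power function. -/
theorem exp_one_not_of_form :
    ¬ ∃ m₁ n₁ m₂ n₂ m₃ n₃ : ℕ, 0 < m₁ ∧ 0 < n₁ ∧ 0 < m₂ ∧ 0 < n₂ ∧ 0 < m₃ ∧ 0 < n₃ ∧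
      Real.exp 1 =
        ((m₁ : ℝ) / (n₁ : ℝ)) ^ (((m₂ : ℝ) / (n₂ : ℝ)) ^ ((m₃ : ℝ) / (n₃ : ℝ))) := by
  rintro ⟨m₁, n₁, m₂, n₂, m₃, n₃, hm₁, hn₁, -, -, -, -, h⟩
  exact exp_one_not_of_form_general (x := (m₁ / n₁ : ℚ)) (by positivity) (isAlgebraic_ratCast ..)
    (isAlgebraic_rpow_ratCast (x := (m₂ / n₂ : ℚ)) (by positivity) (isAlgebraic_ratCast ..)
      (m₃ / n₃)) (by simpa using h)
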